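/- arXiv:2412.07337 — 2 statements merged into one kernel-verified Lean document; each statement's English description precedes it below -/
import Mathlib

section
/- For every natural number n ≥ 3 and every d : Fin n → ℕ with 2 ≤ d i for all i, there exists a state v : (∀ i : Fin n, Fin (d i)) → ℂ which is nonzero and not completely product, such that for every completely product state p : (∀ i : Fin n, Fin (d i)) → ℂ and all nonzero complex numbers a, b, the state a • v + b • p is not completely product. (Thus every multipartite Hilbert space contains at least one unconditionally superposition-robust entangled state.) -/
/-- An `n`-partite state is completely product if its coefficient tensor factorizes. -/
def CompletelyProduct {n : ℕ} {d : Fin n → ℕ}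
    (v : (∀ i : Fin n, Fin (d i)) → ℂ) : Prop :=
  ∃ f : ∀ i : Fin n, Fin (d i) → ℂ, ∀ x, v x = ∏ i, f i (x i)

/-!
The generalized W state has coefficient `1` on the basis vectors that differ from a fixed basis
vector `o` in exactly one party, and `0` elsewhere. No nonzero multiple of it is a sum
`⨂ fᵢ + ⨂ gᵢ` of two product tensors. Contract party `k` with the covector that takes the value
`f k e` at `o k`, the value `-f k (o k)` at some `e ≠ o k`, and `0` elsewhere. It kills the first
summand, so the contracted W state is a product tensor. On two further parties the contraction has
the `2 × 2` block `!![-c * f k (o k), c * f k e; c * f k e, 0]`, and a product tensor has vanishing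
`2 × 2` minors, so `f k e = 0`. By symmetry `g k e = 0`. Then both summands vanish at `o` with its
`k`-th entry replaced by `e`, where the multiple of the W state does not.
-/

open Finset Function

section ProductTensor

variable {ι R : Type*} [Fintype ι] {X : ι → Type*}

/-- Product tensors with coefficients in `R`: the analogue of `CompletelyProduct` for arbitrary
coefficients, finitely many parties, and local bases indexed by arbitrary types `X i`. -/
def IsProductTensor [CommMonoid R] (v : (∀ i, X i) → R) : Prop :=
  ∃ f : ∀ i, X i → R, ∀ x, v x = ∏ i, f i (x i)

lemma prod_apply_update [DecidableEq ι] [CommMonoid R] (f : ∀ i, X i → R) (x : ∀ i, X i)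
    (k : ι) (a : X k) :
    ∏ i, f i (update x k a i) = f k a * ∏ i ∈ univ \ {k}, f i (x i) := by
  simp only [apply_update f, prod_update_of_mem (mem_univ k)]

lemma prod_update_apply [DecidableEq ι] [CommMonoid R] (f : ∀ i, X i → R) (x : ∀ i, X i)
    (k : ι) (h : X k → R) :
    ∏ i, update f k h i (x i) = h (x k) * ∏ i ∈ univ \ {k}, f i (x i) := by
  simp only [apply_update (fun i (φ : X i → R) => φ (x i)), prod_update_of_mem (mem_univ k)]

lemma mul_prod_apply_update_comm [DecidableEq ι] [CommMonoid R] (f : ∀ i, X i → R)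
    (x : ∀ i, X i) (k : ι) (a b : X k) :
    f k b * ∏ i, f i (update x k a i) = f k a * ∏ i, f i (update x k b i) := by
  simp only [prod_apply_update, mul_left_comm]

namespace IsProductTensor

lemma zero [Nonempty ι] [CommMonoidWithZero R] : IsProductTensor (0 : (∀ i, X i) → R) :=
  ⟨0, by simp⟩

lemma smul [Nonempty ι] [CommMonoid R] {v : (∀ i, X i) → R} (hv : IsProductTensor v) (c : R) :
    IsProductTensor (c • v) := by
  classical
  obtain ⟨f, hf⟩ := hv
  let k : ι := Classical.arbitrary ι
  refine ⟨update f k (c • f k), fun x => ?_⟩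
  rw [prod_update_apply, Pi.smul_apply, Pi.smul_apply, hf, smul_mul_assoc, ← prod_apply_update,
    update_eq_self]

lemma contract_pair [DecidableEq ι] [CommRing R] {v : (∀ i, X i) → R} (hv : IsProductTensor v)
    (k : ι) (a b : X k) (α β : R) :
    IsProductTensor fun x => α * v (update x k a) - β * v (update x k b) := by
  obtain ⟨f, hf⟩ := hv
  refine ⟨update f k fun _ => α * f k a - β * f k b, fun x => ?_⟩
  simp only [hf, prod_update_apply, prod_apply_update]
  ring

lemma mul_eq_mul_update [DecidableEq ι] [CommMonoid R] {v : (∀ i, X i) → R}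
    (hv : IsProductTensor v) (x y : ∀ i, X i) (k : ι) :
    v x * v y = v (update x k (y k)) * v (update y k (x k)) := by
  obtain ⟨f, hf⟩ := hv
  simp only [hf, ← prod_mul_distrib]
  refine prod_congr rfl fun i _ => ?_
  obtain rfl | hik := eq_or_ne i k
  · simp only [update_self, mul_comm]
  · simp only [update_of_ne hik]

lemma mul_update_update [DecidableEq ι] [CommMonoid R] {v : (∀ i, X i) → R}
    (hv : IsProductTensor v) (x : ∀ i, X i) {i j : ι} (hij : i ≠ j) (a : X i) (b : X j) :
    v x * v (update (update x i a) j b) = v (update x i a) * v (update x j b) := by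
  have hreset : update (update x j b) i (x i) = update x j b := by
    rw [update_eq_self_iff, update_of_ne hij]
  rw [update_comm hij, hv.mul_eq_mul_update x _ i, update_self, update_idem, hreset]

end IsProductTensor

end ProductTensor

section WTensor

variable {ι : Type*} [Fintype ι] {X : ι → Type*} [∀ i, DecidableEq (X i)]

/-- The generalized W state: the indicator of the Hamming sphere of radius one about `o`. On qubits
with `o = 0` it is the (unnormalized) W state `|10⋯0⟩ + |01⋯0⟩ + ⋯ + |0⋯01⟩`. -/
def wTensor (R : Type*) [Zero R] [One R] (o x : ∀ i, X i) : R :=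
  if hammingDist x o = 1 then 1 else 0

variable {R : Type*}

lemma wTensor_self [Zero R] [One R] (o : ∀ i, X i) : wTensor R o o = 0 := by
  simp [wTensor]

lemma wTensor_update_self [DecidableEq ι] [Zero R] [One R] {o : ∀ i, X i} {i : ι} {a : X i}
    (ha : a ≠ o i) : wTensor R o (update o i a) = 1 := by
  have hsupport : ({j | update o i a j ≠ o j} : Finset ι) = {i} := by
    ext j
    obtain rfl | hji := eq_or_ne j i
    · simpa using ha
    · simp [hji]
  rw [wTensor, hammingDist, hsupport, card_singleton, if_pos rfl]

lemma wTensor_eq_zero_of_ne_of_ne [Zero R] [One R] {o x : ∀ i, X i} {i j : ι} (hij : i ≠ j)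
    (hi : x i ≠ o i) (hj : x j ≠ o j) : wTensor R o x = 0 := by
  have hdist : 1 < hammingDist x o := one_lt_card.2 ⟨i, by simpa, j, by simpa, hij⟩
  exact if_neg hdist.ne'

variable [CommRing R] [NoZeroDivisors R] {o : ∀ i, X i} {c : R} {i j k : ι}

lemma factor_apply_eq_zero_of_smul_wTensor_eq_add (hc : c ≠ 0) {f : ∀ i, X i → R}
    {q : (∀ i, X i) → R} (hq : IsProductTensor q)
    (h : ∀ x, c * wTensor R o x = ∏ l, f l (x l) + q x)
    (hij : i ≠ j) (hik : i ≠ k) (hjk : j ≠ k) [Nontrivial (X i)] [Nontrivial (X j)]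
    {e : X k} (he : e ≠ o k) : f k e = 0 := by
  classical
  obtain ⟨a, ha⟩ := exists_ne (o i)
  obtain ⟨b, hb⟩ := exists_ne (o j)
  let t (x : ∀ l, X l) : R := f k e * (c * wTensor R o (update x k (o k))) -
    f k (o k) * (c * wTensor R o (update x k e))
  have ht_product : IsProductTensor t := by
    convert hq.contract_pair k (o k) e (f k e) (f k (o k)) using 2 with x
    simp only [t, h]
    linear_combination mul_prod_apply_update_comm f x k (o k) e
  have ht_single {l : ι} (hlk : l ≠ k) {y : X l} (hy : y ≠ o l) :
      t (update o l y) = f k e * c := by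
    have hground : update (update o l y) k (o k) = update o l y := by
      rw [update_eq_self_iff, update_of_ne hlk.symm]
    have hexcited : wTensor R o (update (update o l y) k e) = 0 :=
      wTensor_eq_zero_of_ne_of_ne hlk (by simpa [hlk]) (by simpa)
    simp only [t, hground, wTensor_update_self hy, hexcited, mul_one, mul_zero, sub_zero]
  have ht_double : t (update (update o i a) j b) = 0 := by
    have hzero (z : X k) : wTensor R o (update (update (update o i a) j b) k z) = 0 :=
      wTensor_eq_zero_of_ne_of_ne hij (by simpa [hij, hik]) (by simpa [hjk])
    simp only [t, hzero, mul_zero, sub_zero]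
  have hminor := ht_product.mul_update_update o hij a b
  rw [ht_double, ht_single hik ha, ht_single hjk hb, mul_zero] at hminor
  exact (mul_eq_zero.1 (mul_self_eq_zero.1 hminor.symm)).resolve_right hc

theorem smul_wTensor_ne_add (hc : c ≠ 0) (hij : i ≠ j) (hik : i ≠ k) (hjk : j ≠ k)
    [Nontrivial (X i)] [Nontrivial (X j)] [Nontrivial (X k)] {p q : (∀ i, X i) → R}
    (hp : IsProductTensor p) (hq : IsProductTensor q) : c • wTensor R o ≠ p + q := by
  classical
  intro h
  have hpq (x : ∀ i, X i) : c * wTensor R o x = p x + q x := congrFun h x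
  have ⟨f, hf⟩ := hp
  have ⟨g, hg⟩ := hq
  obtain ⟨e, he⟩ := exists_ne (o k)
  have hfe : f k e = 0 := factor_apply_eq_zero_of_smul_wTensor_eq_add hc hq
    (fun x => by rw [hpq, hf]) hij hik hjk he
  have hge : g k e = 0 := factor_apply_eq_zero_of_smul_wTensor_eq_add hc hp
    (fun x => by rw [hpq, hg, add_comm]) hij hik hjk he
  apply hc
  calc
    c = c * wTensor R o (update o k e) := by rw [wTensor_update_self he, mul_one]
    _ = 0 := by rw [hpq, hf, hg, prod_apply_update, prod_apply_update, hfe, hge]; simp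

end WTensor

theorem exists_unconditionally_superposition_robust_state_general
    {ι : Type*} [Fintype ι] {X : ι → Type*} [∀ i, Nonempty (X i)]
    (hX : 2 < {i | Nontrivial (X i)}.ncard) (R : Type*) [CommRing R] [IsDomain R] :
    ∃ v : (∀ i, X i) → R,
      v ≠ 0 ∧ ¬ IsProductTensor v ∧
      ∀ p : (∀ i, X i) → R, IsProductTensor p →
        ∀ a b : R, a ≠ 0 → ¬ IsProductTensor (a • v + b • p) := by
  classical
  obtain ⟨i, j, k, hi, hj, hk, hij, hik, hjk⟩ := (Set.two_lt_ncard_iff).1 hX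
  have : Nontrivial (X i) := hi
  have : Nontrivial (X j) := hj
  have : Nontrivial (X k) := hk
  have : Nonempty ι := ⟨i⟩
  let w : (∀ i, X i) → R := wTensor R fun i => Classical.arbitrary (X i)
  have hw {a : R} (ha : a ≠ 0) {p q : (∀ i, X i) → R} (hp : IsProductTensor p)
      (hq : IsProductTensor q) : a • w ≠ p + q := smul_wTensor_ne_add ha hij hik hjk hp hq
  have hw_entangled : ¬ IsProductTensor w := fun h =>
    hw one_ne_zero h .zero (by rw [one_smul, add_zero])
  refine ⟨w, fun h => hw_entangled (h ▸ .zero), hw_entangled, fun p hp a b ha h => ?_⟩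
  exact hw ha h (hp.smul (-b)) (by rw [neg_smul, add_neg_cancel_right])

/-- Theorem 1: every multipartite Hilbert space (at least 3 parties, each local
dimension at least 2) contains at least one entangled state whose nontrivial
superposition with an arbitrary completely product state is never completely
product, i.e. an unconditionally superposition-robust entangled state. -/
theorem exists_unconditionally_superposition_robust_state
    (n : ℕ) (hn : 3 ≤ n) (d : Fin n → ℕ) (hd : ∀ i, 2 ≤ d i) :
    ∃ v : (∀ i : Fin n, Fin (d i)) → ℂ,
      v ≠ 0 ∧ ¬ CompletelyProduct v ∧
      ∀ p : (∀ i : Fin n, Fin (d i)) → ℂ, CompletelyProduct p →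
        ∀ a b : ℂ, a ≠ 0 → b ≠ 0 → ¬ CompletelyProduct (a • v + b • p) := by
  have (i : Fin n) : Nontrivial (Fin (d i)) := Fin.nontrivial_iff_two_le.2 (hd i)
  have hparties : 2 < {i | Nontrivial (Fin (d i))}.ncard := by
    simpa [this, Set.ncard_univ] using Nat.lt_of_succ_le hn
  obtain ⟨v, hv_ne, hv, hv_robust⟩ :=
    exists_unconditionally_superposition_robust_state_general hparties ℂ
  exact ⟨v, hv_ne, hv, fun p hp a b ha _ => hv_robust p hp a b ha⟩
end

section
/- Let ω = exp(2πi/3) and define the six three-qubit W-UEB states (with |ijk⟩ denoting the standard basis tensor): ψ₁ = (1/√3)(|001⟩+|010⟩+|100⟩), ψ₂ = (1/√3)(|001⟩+ω|010⟩+ω²|100⟩), ψ₃ = (1/√3)(|001⟩+ω²|010⟩+ω|100⟩), ψ₄ = (1/√3)(|000⟩+|101⟩+|110⟩), ψ₅ = (1/√3)(|000⟩+ω|101⟩+ω²|110⟩), ψ₆ = (1/√3)(|000⟩+ω²|101⟩+ω|110⟩). Then for each m ∈ {1,…,6}, every completely product three-qubit state p, and all nonzero complex numbers a, b, the state a • ψₘ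 + b • p is not completely product. -/
/-- The standard basis ket `|i j k⟩` of the three-qubit space. -/
def ket (i j k : Fin 2) : Fin 2 → Fin 2 → Fin 2 → ℂ :=
  fun i' j' k' => if i' = i ∧ j' = j ∧ k' = k then 1 else 0

/-- A three-qubit state is completely product if its coefficient tensor factorizes. -/
def CompProd3 (v : Fin 2 → Fin 2 → Fin 2 → ℂ) : Prop :=
  ∃ f g h : Fin 2 → ℂ, ∀ i j k, v i j k = f i * g j * h k

/-- Hermitian inner product on three-qubit states. -/
noncomputable def ip3 (u v : Fin 2 → Fin 2 → Fin 2 → ℂ) : ℂ :=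
  ∑ i, ∑ j, ∑ k, (starRingEnd ℂ) (u i j k) * v i j k

/-- The cube root of unity `ω = exp(2πi/3)`. -/
noncomputable def ω : ℂ := Complex.exp (2 * Real.pi * Complex.I / 3)

/-- The six states of the three-qubit W-type unextendible entangled basis. -/
noncomputable def ψW : Fin 6 → (Fin 2 → Fin 2 → Fin 2 → ℂ) :=
  ![((Real.sqrt 3 : ℂ))⁻¹ • (ket 0 0 1 + ket 0 1 0 + ket 1 0 0),
    ((Real.sqrt 3 : ℂ))⁻¹ • (ket 0 0 1 + ω • ket 0 1 0 + ω ^ 2 • ket 1 0 0),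
    ((Real.sqrt 3 : ℂ))⁻¹ • (ket 0 0 1 + ω ^ 2 • ket 0 1 0 + ω • ket 1 0 0),
    ((Real.sqrt 3 : ℂ))⁻¹ • (ket 0 0 0 + ket 1 0 1 + ket 1 1 0),
    ((Real.sqrt 3 : ℂ))⁻¹ • (ket 0 0 0 + ω • ket 1 0 1 + ω ^ 2 • ket 1 1 0),
    ((Real.sqrt 3 : ℂ))⁻¹ • (ket 0 0 0 + ω ^ 2 • ket 1 0 1 + ω • ket 1 1 0)]

/-! An equation `a • ψ + b • p = q` with `p`, `q` product tensors and `a ≠ 0` exhibits `ψ` as a sum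
of two product tensors. The slices of a `2 × 2 × 2` tensor of rank at most two are simultaneously
of the form `U D V` with `D` diagonal, so if one slice `M` is invertible and `N` is the other,
then `M⁻¹ N` is diagonalizable. For every state of the W-UEB one slice is invertible and
`M⁻¹ N` is a nonzero nilpotent matrix, which is not diagonalizable. -/

open Matrix

/-- The third-order tensor `v` has tensor rank at most `r`: it is a sum of `r` product tensors.
Tensors are curried functions, so that `v i` is the slice at `i`. -/
def TensorRankLE {ι m n R : Type*} [CommSemiring R] (v : ι → m → n → R) (r : ℕ) : Prop :=
  ∃ (f : Fin r → ι → R) (g : Fin r → m → R) (h : Fin r → n → R),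
    ∀ i j k, v i j k = ∑ l, f l i * g l j * h l k

theorem TensorRankLE.exists_slice_eq_mul_diagonal_mul {ι m n R : Type*} [CommSemiring R]
    {v : ι → m → n → R} {r : ℕ} (hv : TensorRankLE v r) :
    ∃ (U : Matrix m (Fin r) R) (d : ι → Fin r → R) (V : Matrix (Fin r) n R),
      ∀ i, of (v i) = U * diagonal (d i) * V := by
  obtain ⟨f, g, h, hv⟩ := hv
  refine ⟨of fun j l => g l j, fun i l => f l i, of h, fun i => ?_⟩
  ext j k
  rw [of_apply, hv, mul_apply]
  simp only [mul_diagonal, of_apply, mul_comm (g _ j)]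

theorem CompProd3.smul {v : Fin 2 → Fin 2 → Fin 2 → ℂ} (hv : CompProd3 v) (c : ℂ) :
    CompProd3 (c • v) := by
  obtain ⟨f, g, h, hv⟩ := hv
  exact ⟨c • f, g, h, fun i j k => by simp only [Pi.smul_apply, smul_eq_mul, hv, mul_assoc]⟩

theorem CompProd3.tensorRankLE_add {u v : Fin 2 → Fin 2 → Fin 2 → ℂ} (hu : CompProd3 u)
    (hv : CompProd3 v) : TensorRankLE (u + v) 2 := by
  obtain ⟨f₁, g₁, h₁, hu⟩ := hu
  obtain ⟨f₂, g₂, h₂, hv⟩ := hv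
  exact ⟨![f₁, f₂], ![g₁, g₂], ![h₁, h₂], fun i j k => by simp [hu, hv]⟩

theorem CompProd3.tensorRankLE_two_of_smul_add_smul {v p : Fin 2 → Fin 2 → Fin 2 → ℂ} {a b : ℂ}
    (ha : a ≠ 0) (hp : CompProd3 p) (hq : CompProd3 (a • v + b • p)) : TensorRankLE v 2 := by
  have hv : v = a⁻¹ • (a • v + b • p) + (-(a⁻¹ * b)) • p := by
    rw [smul_add, inv_smul_smul₀ ha]
    module
  rw [hv]
  exact (hq.smul _).tensorRankLE_add (hp.smul _)

section Slices

variable {n R : Type*} [Fintype n] [DecidableEq n] [CommRing R]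

theorem semiconjBy_inv_mul_of_isUnit {U V : Matrix n n R} {d e : n → R}
    (hunit : IsUnit (U * diagonal d * V)) :
    SemiconjBy V ((U * diagonal d * V)⁻¹ * (U * diagonal e * V))
      (diagonal (Ring.inverse d * e)) := by
  have hV : IsUnit V.det := (isUnit_iff_isUnit_det V).mp (isUnit_of_mul_isUnit_right hunit)
  have hU : IsUnit U.det := (isUnit_iff_isUnit_det U).mp
    (isUnit_of_mul_isUnit_left (isUnit_of_mul_isUnit_left hunit))
  calc V * ((U * diagonal d * V)⁻¹ * (U * diagonal e * V))
      = V * V⁻¹ * (diagonal d)⁻¹ * (U⁻¹ * U) * diagonal e * V := by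
        simp only [Matrix.mul_inv_rev, Matrix.mul_assoc]
    _ = diagonal (Ring.inverse d * e) * V := by
        rw [mul_nonsing_inv V hV, nonsing_inv_mul U hU, inv_diagonal, Matrix.one_mul,
          Matrix.mul_one, diagonal_mul_diagonal, ← Pi.mul_def]

theorem eq_zero_of_isNilpotent_inv_mul [IsReduced R] {U V : Matrix n n R} {d e : n → R}
    (hunit : IsUnit (U * diagonal d * V))
    (hnil : IsNilpotent ((U * diagonal d * V)⁻¹ * (U * diagonal e * V))) : e = 0 := by
  have hV : IsUnit V := isUnit_of_mul_isUnit_right hunit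
  have hd : IsUnit d :=
    isUnit_diagonal.mp (isUnit_of_mul_isUnit_right (isUnit_of_mul_isUnit_left hunit))
  have hdiag : IsNilpotent (diagonal (Ring.inverse d * e)) := by
    obtain ⟨k, hk⟩ := hnil
    have hpow := (semiconjBy_inv_mul_of_isUnit (e := e) hunit).pow_right k
    rw [hk, SemiconjBy, mul_zero] at hpow
    exact ⟨k, hV.mul_left_eq_zero.mp hpow.symm⟩
  have hquot : Ring.inverse d * e = 0 :=
    ((IsNilpotent.map_iff (f := diagonalRingHom n R) diagonal_injective).mp hdiag).eq_zero
  exact hd.ringInverse.mul_right_eq_zero.mp hquot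

theorem TensorRankLE.slice_eq_zero_of_isNilpotent {ι : Type*} [IsReduced R] {r : ℕ}
    {v : ι → Fin r → Fin r → R} (hv : TensorRankLE v r) {i₀ i₁ : ι}
    (hunit : IsUnit (of (v i₀))) (hnil : IsNilpotent ((of (v i₀))⁻¹ * of (v i₁))) :
    v i₁ = 0 := by
  obtain ⟨U, d, V, hslice⟩ := hv.exists_slice_eq_mul_diagonal_mul
  rw [hslice i₀] at hunit
  rw [hslice i₀, hslice i₁] at hnil
  have hd : d i₁ = 0 := eq_zero_of_isNilpotent_inv_mul hunit hnil
  have hzero : of (v i₁) = 0 := by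
    rw [hslice i₁, hd, Matrix.diagonal_zero', Matrix.mul_zero, Matrix.zero_mul]
  exact of.injective hzero

theorem not_tensorRankLE_two_of_slices_eq {ι : Type*} [IsReduced R] {v : ι → Fin 2 → Fin 2 → R}
    {i₀ i₁ : ι} {x y z : R} (hx : IsUnit x) (hy : IsUnit y) (hz : z ≠ 0)
    (h₀ : of (v i₀) = !![0, x; y, 0]) (h₁ : of (v i₁) = !![z, 0; 0, 0]) : ¬ TensorRankLE v 2 := by
  intro hv
  have hunit : IsUnit !![0, x; y, 0] := by
    rw [isUnit_iff_isUnit_det, det_fin_two_of, zero_mul, zero_sub]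
    exact (hx.mul hy).neg
  have hnil : IsNilpotent (!![0, x; y, 0]⁻¹ * !![z, 0; 0, 0]) := by
    refine ⟨2, ?_⟩
    ext j k
    fin_cases j <;> fin_cases k <;> simp [inv_def, adjugate_fin_two_of, sq]
  have hzero : v i₁ = 0 := hv.slice_eq_zero_of_isNilpotent (by rwa [h₀]) (by rwa [h₀, h₁])
  exact hz (by simpa [hzero] using (congrFun₂ h₁ 0 0).symm)

end Slices

theorem not_tensorRankLE_two_w {i₀ i₁ : Fin 2} (hi : i₀ ≠ i₁) {x y z : ℂ} (hx : x ≠ 0)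
    (hy : y ≠ 0) (hz : z ≠ 0) :
    ¬ TensorRankLE (x • ket i₀ 0 1 + y • ket i₀ 1 0 + z • ket i₁ 0 0) 2 := by
  refine not_tensorRankLE_two_of_slices_eq (i₀ := i₀) (i₁ := i₁) hx.isUnit hy.isUnit hz ?_ ?_ <;>
  · ext j k
    fin_cases j <;> fin_cases k <;> simp [ket, hi, hi.symm]

theorem exists_ψW_eq_w (m : Fin 6) :
    ∃ (i₀ i₁ : Fin 2) (x y z : ℂ), i₀ ≠ i₁ ∧ x ≠ 0 ∧ y ≠ 0 ∧ z ≠ 0 ∧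
      ψW m = x • ket i₀ 0 1 + y • ket i₀ 1 0 + z • ket i₁ 0 0 := by
  have hω : ω ≠ 0 := Complex.exp_ne_zero _
  let c : ℂ := (Real.sqrt 3 : ℂ)⁻¹
  have hc : c ≠ 0 := by simp [c]
  have hcω : c * ω ≠ 0 := mul_ne_zero hc hω
  have hcω₂ : c * ω ^ 2 ≠ 0 := mul_ne_zero hc (pow_ne_zero 2 hω)
  fin_cases m
  · exact ⟨0, 1, c, c, c, by decide, hc, hc, hc, by simp [ψW, c]⟩
  · exact ⟨0, 1, c, c * ω, c * ω ^ 2, by decide, hc, hcω, hcω₂, by simp [ψW, c, mul_smul]⟩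
  · exact ⟨0, 1, c, c * ω ^ 2, c * ω, by decide, hc, hcω₂, hcω, by simp [ψW, c, mul_smul]⟩
  · exact ⟨1, 0, c, c, c, by decide, hc, hc, hc, by simpa [ψW, c] using add_rotate _ _ _⟩
  · exact ⟨1, 0, c * ω, c * ω ^ 2, c, by decide, hcω, hcω₂, hc, by
      simpa [ψW, c, mul_smul] using add_rotate _ _ _⟩
  · exact ⟨1, 0, c * ω ^ 2, c * ω, c, by decide, hcω₂, hcω, hc, by
      simpa [ψW, c, mul_smul] using add_rotate _ _ _⟩

/-- Each state of the W-UEB is unconditionally superposition-robust: its nontrivial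
superposition with any completely product three-qubit state is never completely
product. -/
theorem wUEB_unconditional_inseparability :
    ∀ m : Fin 6, ∀ p : Fin 2 → Fin 2 → Fin 2 → ℂ, CompProd3 p →
      ∀ a b : ℂ, a ≠ 0 → b ≠ 0 → ¬ CompProd3 (a • ψW m + b • p) := by
  intro m p hp a b ha _ hq
  obtain ⟨i₀, i₁, x, y, z, hi, hx, hy, hz, hψ⟩ := exists_ψW_eq_w m
  have hrank : TensorRankLE (ψW m) 2 := hp.tensorRankLE_two_of_smul_add_smul ha hq
  rw [hψ] at hrank
  exact not_tensorRankLE_two_w hi hx hy hz hrank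
end
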